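/- arXiv:2605.04529 — 3 statements merged into one kernel-verified Lean document; each statement's English description precedes it below -/
import Mathlib

section
/- Let 𝒜 be an abelian category and let 𝒜₀ ⊆ 𝒜 be a full abelian subcategory which is almost hereditary in 𝒜. Let E and F be objects of D^b(𝒜) all of whose cohomology objects H^i(E) and H^i(F) lie in 𝒜₀. If Hom^n(E, F) = 0 for every integer n ≤ 0, then: (1) Hom^p(H^i(E), H^{i−n}(F)) = 0 for all integers i and p and every integer n ≥ 1; and (2) Hom^0(H^i(E), H^i(F)) = 0 for every integer i. -/
open CategoryTheory Limits DerivedCategory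

universe w v u

noncomputable section

variable (𝒜 : Type u) [Category.{v} 𝒜] [Abelian 𝒜] [HasDerivedCategory.{w} 𝒜]

/-- The object of the derived category associated with an object of the abelian
category, placed in degree `0`. -/
abbrev degZero (A : 𝒜) : DerivedCategory 𝒜 := (DerivedCategory.singleFunctor 𝒜 0).obj A

/-- An object of the derived category is bounded (i.e. belongs to `D^b(𝒜)`) if only
finitely many of its cohomology objects are nonzero. -/
def IsBoundedComplex (E : DerivedCategory 𝒜) : Prop :=
  ∃ a b : ℤ, ∀ i : ℤ, (i < a ∨ b < i) →
    IsZero ((DerivedCategory.homologyFunctor 𝒜 i).obj E)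

/-- A collection of objects `A₀` of `𝒜` is a (strictly) full abelian subcategory if it
contains the zero objects and is closed under isomorphisms, kernels, cokernels and
finite biproducts. -/
def IsAbelianSubcategory (A₀ : Set 𝒜) : Prop :=
  (∀ X : 𝒜, IsZero X → X ∈ A₀) ∧
  (∀ X Y : 𝒜, X ∈ A₀ → Nonempty (X ≅ Y) → Y ∈ A₀) ∧
  (∀ (X Y : 𝒜) (f : X ⟶ Y), X ∈ A₀ → Y ∈ A₀ → kernel f ∈ A₀ ∧ cokernel f ∈ A₀) ∧
  (∀ X Y : 𝒜, X ∈ A₀ → Y ∈ A₀ → (X ⊞ Y) ∈ A₀)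

/-- `A₀` is almost hereditary in `𝒜`: for objects `E`, `F` of `A₀`, the vanishing of
`Hom^0(E,F)` and `Hom^1(E,F)` (computed in the derived category) implies the vanishing
of `Hom^p(E,F)` for all `p ∈ ℤ`. -/
def AlmostHereditary (A₀ : Set 𝒜) : Prop :=
  ∀ (A B : 𝒜), A ∈ A₀ → B ∈ A₀ →
    (∀ f : degZero 𝒜 A ⟶ degZero 𝒜 B, f = 0) →
    (∀ f : degZero 𝒜 A ⟶ (degZero 𝒜 B)⟦(1 : ℤ)⟧, f = 0) →
    ∀ (p : ℤ) (f : degZero 𝒜 A ⟶ (degZero 𝒜 B)⟦p⟧), f = 0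

end

/-!
Let `P^n X` denote the cohomology of `X` for a t-structure, kept in degree `n`. The heart of the
argument is that, for `m ≤ k - i + 1`, the vanishing of all morphisms `E ⟶ F⟦m⟧` forces that of
every `f : P^i E ⟶ P^k F⟦m⟧` once `P^a E` and `P^b F` are orthogonal in all degrees whenever
`b - a < k - i`. This orthogonality lets `f` be extended along `P^i E ⟶ τ≥i E` and lifted along
`τ<(k+1) F ⟶ P^k F`, giving `g : τ≥i E ⟶ τ<(k+1) F⟦m⟧`. The composition of `g` with
`τ<(i+1) E ⟶ τ≥i E` is zero: for `m ≤ k - i + 1` it can be tested after mapping to `F⟦m⟧`, where it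
factors through a morphism `E ⟶ F⟦m⟧`. Hence `f = 0`, since in the same range a morphism
`P^i E ⟶ P^k F⟦m⟧` can be tested on `τ<(i+1) E`.

For `k < i` the vanishing of `Hom^n(E, F)` for `n ≤ 0` thus kills `Hom^0` and `Hom^1` between
`H^i E` and `H^k F`; almost heredity kills the remaining `Hom^p`, which feeds an induction on
`k - i` starting from differences so negative that `H^i E` or `H^k F` vanishes. For `k = i` only
`Hom^0` is reached.
-/

section GradedOrthogonal

variable {C : Type*} [Category* C] [HasZeroMorphisms C]

lemma hom_eq_zero_of_iso {X X' Y Y' : C} (e : X ≅ X') (e' : Y ≅ Y')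
    (h : ∀ f : X ⟶ Y, f = 0) (f : X' ⟶ Y') : f = 0 := by
  rw [← cancel_epi e.hom, ← cancel_mono e'.inv, comp_zero, zero_comp]
  exact h _

variable [HasShift C ℤ]

lemma hom_eq_zero_of_hom_shift_zero_eq_zero {X Y : C} (h : ∀ f : X ⟶ Y⟦(0 : ℤ)⟧, f = 0)
    (f : X ⟶ Y) : f = 0 := by
  rw [← cancel_mono ((shiftFunctorZero C ℤ).inv.app Y), zero_comp]
  exact h _

lemma hom_shift_eq_zero_iff {X Y : C} {m a b p : ℤ} (h : m + a = b + p) :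
    (∀ f : X⟦a⟧ ⟶ Y⟦b⟧⟦p⟧, f = 0) ↔ ∀ f : X ⟶ Y⟦m⟧, f = 0 := by
  let e : Y⟦m⟧⟦a⟧ ≅ Y⟦b⟧⟦p⟧ :=
    ((shiftFunctorAdd' C m a _ h).symm ≪≫ shiftFunctorAdd' C b p _ rfl).app Y
  let φ : (X ⟶ Y⟦m⟧) ≃ (X⟦a⟧ ⟶ Y⟦b⟧⟦p⟧) :=
    (Functor.FullyFaithful.ofFullyFaithful (shiftFunctor C a)).homEquiv.trans e.homToEquiv
  have hφ : φ 0 = 0 := by simp [φ]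
  rw [← φ.forall_congr_right]
  simp only [← hφ, φ.injective.eq_iff]

/-- Orthogonality of `X` and `Y` with respect to the graded group `⨁ₙ Hom(X, Y⟦n⟧)`. Unlike
`Hom(X, Y) = 0`, it is invariant under shifting either object. -/
def GradedOrthogonal (X Y : C) : Prop :=
  ∀ (n : ℤ) (f : X ⟶ Y⟦n⟧), f = 0

namespace GradedOrthogonal

lemma of_iso {X X' Y Y' : C} (h : GradedOrthogonal X Y) (e : X ≅ X') (e' : Y ≅ Y') :
    GradedOrthogonal X' Y' :=
  fun n ↦ hom_eq_zero_of_iso e ((shiftFunctor C n).mapIso e') (h n)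

lemma hom_eq_zero {X Y : C} (h : GradedOrthogonal X Y) (f : X ⟶ Y) : f = 0 :=
  hom_eq_zero_of_hom_shift_zero_eq_zero (h 0) f

lemma iff_leftOrthogonal {X Y : C} :
    GradedOrthogonal X Y ↔ ((ObjectProperty.singleton Y).shiftClosure ℤ).leftOrthogonal X := by
  constructor
  · rintro h Z f ⟨_, n, e, ⟨_⟩⟩
    rw [← cancel_mono e.hom, zero_comp]
    exact h n _
  · exact fun h n f ↦ h f ⟨Y, n, Iso.refl _, ⟨⟨⟩⟩⟩

lemma shift_left_iff {X Y : C} (a : ℤ) : GradedOrthogonal (X⟦a⟧) Y ↔ GradedOrthogonal X Y := by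
  simp only [iff_leftOrthogonal, ObjectProperty.prop_shift_iff_of_isStableUnderShift]

lemma iff_rightOrthogonal {X Y : C} :
    GradedOrthogonal X Y ↔ ((ObjectProperty.singleton X).shiftClosure ℤ).rightOrthogonal Y := by
  constructor
  · rintro h Z f ⟨_, n, e, ⟨_⟩⟩
    rw [← cancel_epi e.inv, comp_zero]
    exact ((shift_left_iff n).2 h).hom_eq_zero _
  · exact fun h n f ↦ ObjectProperty.le_shift _ n _ h f
      (ObjectProperty.le_shiftClosure _ _ ⟨⟨⟩⟩)

lemma shift_right_iff {X Y : C} (a : ℤ) : GradedOrthogonal X (Y⟦a⟧) ↔ GradedOrthogonal X Y := by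
  simp only [iff_rightOrthogonal, ObjectProperty.prop_shift_iff_of_isStableUnderShift]

end GradedOrthogonal

end GradedOrthogonal

section TStructure

open Pretriangulated Triangulated

variable {C : Type*} [Category* C] [Preadditive C] [HasZeroObject C] [HasShift C ℤ]
  [∀ n : ℤ, (shiftFunctor C n).Additive] [Pretriangulated C] (t : TStructure C)

lemma exists_mor₁_comp_comp_shift_mor₂_eq {T U : Triangle C} (hT : T ∈ distTriang C)
    (hU : U ∈ distTriang C) (h₃ : GradedOrthogonal T.obj₃ U.obj₃)
    (h₂ : GradedOrthogonal T.obj₂ U.obj₁) {m : ℤ} (f : T.obj₁ ⟶ U.obj₃⟦m⟧) :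
    ∃ g : T.obj₂ ⟶ U.obj₂⟦m⟧, T.mor₁ ≫ g ≫ U.mor₂⟦m⟧' = f := by
  obtain ⟨f', rfl⟩ : ∃ f' : T.obj₂ ⟶ U.obj₃⟦m⟧, f = T.mor₁ ≫ f' :=
    Triangle.yoneda_exact₂ _ (inv_rot_of_distTriang _ hT) f
      ((GradedOrthogonal.shift_left_iff (-1)).2 h₃ m _)
  obtain ⟨g, rfl⟩ : ∃ g : T.obj₂ ⟶ U.obj₂⟦m⟧, f' = g ≫ (m.negOnePow • U.mor₂⟦m⟧') :=
    Triangle.coyoneda_exact₃ _ (Triangle.shift_distinguished U hU m) f'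
      ((GradedOrthogonal.shift_right_iff m).2 h₂ 1 _)
  exact ⟨m.negOnePow • g, by rw [Linear.comp_units_smul, Linear.units_smul_comp]⟩

lemma eq_zero_of_mor₂_comp_eq_zero {T : Triangle C} (hT : T ∈ distTriang C) {Z : C} {p q : ℤ}
    (h₁ : t.IsLE T.obj₁ p) (hZ : t.IsGE Z q) (hpq : p ≤ q) {f : T.obj₃ ⟶ Z}
    (hf : T.mor₂ ≫ f = 0) : f = 0 := by
  obtain ⟨g, rfl⟩ := Triangle.yoneda_exact₃ _ hT f hf
  have : t.IsLE (T.obj₁⟦(1 : ℤ)⟧) (p - 1) := t.isLE_shift _ p 1 (p - 1)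
  rw [t.zero_of_isLE_of_isGE g (p - 1) q (by lia) this hZ, comp_zero]

lemma eq_zero_of_comp_shift_mor₁_eq_zero {T : Triangle C} (hT : T ∈ distTriang C) {W : C}
    {p q m : ℤ} (hW : t.IsLE W p) (h₃ : t.IsGE T.obj₃ q) (hpq : p + m ≤ q)
    {f : W ⟶ T.obj₁⟦m⟧} (hf : f ≫ T.mor₁⟦m⟧' = 0) : f = 0 := by
  have hf' : f ≫ (m.negOnePow • T.mor₁⟦m⟧') = 0 := by rw [Linear.comp_units_smul, hf, smul_zero]
  obtain ⟨g, rfl⟩ : ∃ g : W ⟶ T.obj₃⟦m⟧⟦(-1 : ℤ)⟧,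
      f = g ≫ (Triangle.invRotate ((shiftFunctor (Triangle C) m).obj T)).mor₁ :=
    Triangle.coyoneda_exact₂ _
      (inv_rot_of_distTriang _ (Triangle.shift_distinguished T hT m)) f hf'
  have hT₃ : t.IsGE (T.obj₃⟦m⟧) (q - m) := t.isGE_shift _ q m _
  have hT₃' : t.IsGE (T.obj₃⟦m⟧⟦(-1 : ℤ)⟧) (q - m + 1) := t.isGE_shift _ (q - m) (-1) _
  rw [t.zero_of_isLE_of_isGE g p (q - m + 1) (by lia) hW hT₃']
  exact zero_comp

/-- The `n`-th cohomology of `X` with respect to `t`, kept in degree `n` (it is `Hⁿ(X)⟦-n⟧`). -/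
noncomputable abbrev gradedPiece (n : ℤ) (X : C) : C :=
  (t.truncGE n).obj ((t.truncLT (n + 1)).obj X)

/-- The `n`-th cohomology of `X` with respect to `t`, as an object of the heart. -/
noncomputable abbrev tCohomology (n : ℤ) (X : C) : C := (gradedPiece t n X)⟦n⟧

lemma isZero_tCohomology_of_isGE {X : C} {c n : ℤ} [t.IsGE X c] (hn : n < c) :
    IsZero (tCohomology t n X) :=
  have : t.IsGE X (n + 1) := t.isGE_of_ge X (n + 1) c hn
  (shiftFunctor C n).map_isZero ((t.truncGE n).map_isZero (t.isZero_truncLT_obj_of_isGE (n + 1) X))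

variable [IsTriangulated C]

lemma isZero_tCohomology_of_isLE {X : C} {b n : ℤ} [t.IsLE X b] (hn : b < n) :
    IsZero (tCohomology t n X) :=
  (shiftFunctor C n).map_isZero (t.isZero (gradedPiece t n X) b n hn)

lemma exists_distTriang_truncGE (a b : ℤ) (h : a ≤ b) (X : C) :
    ∃ δ, Triangle.mk ((t.truncGE a).map ((t.truncLTι b).app X))
      ((t.natTransTruncGEOfLE a b h).app X) δ ∈ distTriang C := by
  have comm : (t.natTransTruncLTOfLE a b h).app X ≫ (t.truncLTι b).app X =
      (t.truncLTι a).app X := by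
    simp
  let o := someOctahedron comm (t.triangleLTLTGELT_distinguished a b h X)
    (t.triangleLTGE_distinguished b X) (t.triangleLTGE_distinguished a X)
  have h₁ : o.m₁ = (t.truncGE a).map ((t.truncLTι b).app X) :=
    t.from_truncGE_obj_ext (o.comm₁.trans (by simp))
  have : t.IsGE ((t.truncGE b).obj X) a := t.isGE_truncGE_obj X b a
  have h₃ : o.m₃ = (t.natTransTruncGEOfLE a b h).app X :=
    t.from_truncGE_obj_ext (o.comm₃.trans (by simp))
  exact ⟨_, h₁ ▸ h₃ ▸ o.mem⟩

section PieceInduction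

variable (P : ObjectProperty C) [P.ContainsZero] [P.IsClosedUnderIsomorphisms]
  [P.IsTriangulatedClosed₂]

lemma prop_truncGE_of_prop_gradedPiece {X : C} (hX : t.minus X) {i : ℤ}
    (h : ∀ a, i ≤ a → P (gradedPiece t a X)) : P ((t.truncGE i).obj X) := by
  obtain ⟨b, _⟩ := hX
  obtain ⟨N, hN⟩ : ∃ N : ℕ, b < i + N := ⟨(b + 1 - i).toNat, by lia⟩
  induction N generalizing i with
  | zero =>
    exact P.prop_of_isZero (t.isZero _ b i (by simpa using hN))
  | succ N ih =>
    obtain ⟨δ, hT⟩ := exists_distTriang_truncGE t i (i + 1) (by lia) X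
    exact P.ext_of_isTriangulatedClosed₂ _ hT (h i le_rfl)
      (ih (fun a ha ↦ h a (by lia)) (by lia))

lemma prop_truncLT_of_prop_gradedPiece {X : C} (hX : t.plus X) {k : ℤ}
    (h : ∀ a, a < k → P (gradedPiece t a X)) : P ((t.truncLT k).obj X) := by
  obtain ⟨c, _⟩ := hX
  obtain ⟨N, hN⟩ : ∃ N : ℕ, k ≤ c + N := ⟨(k - c).toNat, by lia⟩
  induction N generalizing k with
  | zero =>
    exact P.prop_of_isZero (t.isZero _ (k - 1) c (by lia))
  | succ N ih =>
    obtain ⟨k, rfl⟩ : ∃ k', k = k' + 1 := ⟨k - 1, by lia⟩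
    exact P.ext_of_isTriangulatedClosed₂ _ (t.triangleLTLTGELT_distinguished k (k + 1) (by lia) X)
      (ih (fun a ha ↦ h a (by lia)) (by lia)) (h k (by lia))

end PieceInduction

lemma gradedOrthogonal_truncGE_left {X Y : C} (hX : t.minus X) {i : ℤ}
    (h : ∀ a, i ≤ a → GradedOrthogonal (gradedPiece t a X) Y) :
    GradedOrthogonal ((t.truncGE i).obj X) Y := by
  simp only [GradedOrthogonal.iff_leftOrthogonal] at h ⊢
  exact prop_truncGE_of_prop_gradedPiece t _ hX h

lemma gradedOrthogonal_truncLT_right {X Y : C} (hY : t.plus Y) {k : ℤ}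
    (h : ∀ b, b < k → GradedOrthogonal X (gradedPiece t b Y)) :
    GradedOrthogonal X ((t.truncLT k).obj Y) := by
  simp only [GradedOrthogonal.iff_rightOrthogonal] at h ⊢
  exact prop_truncLT_of_prop_gradedPiece t _ hY h

lemma hom_gradedPiece_eq_zero {E F : C} (hE : t.minus E) (hF : t.plus F) {i k m : ℤ}
    (him : i + m ≤ k + 1) (h₀ : ∀ f : E ⟶ F⟦m⟧, f = 0)
    (hV : ∀ a b, b - a < k - i → GradedOrthogonal (gradedPiece t a E) (gradedPiece t b F))
    (f : gradedPiece t i E ⟶ (gradedPiece t k F)⟦m⟧) : f = 0 := by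
  obtain ⟨δ, hT⟩ := exists_distTriang_truncGE t i (i + 1) (by lia) E
  have hU := t.triangleLTLTGELT_distinguished k (k + 1) (by lia) F
  have h₃ : GradedOrthogonal ((t.truncGE (i + 1)).obj E) (gradedPiece t k F) :=
    gradedOrthogonal_truncGE_left t hE fun a ha ↦ hV a k (by lia)
  have h₂ : GradedOrthogonal ((t.truncGE i).obj E) ((t.truncLT k).obj F) :=
    gradedOrthogonal_truncGE_left t hE fun a ha ↦
      gradedOrthogonal_truncLT_right t hF fun b hb ↦ hV a b (by lia)
  obtain ⟨g, rfl⟩ : ∃ g : (t.truncGE i).obj E ⟶ ((t.truncLT (k + 1)).obj F)⟦m⟧,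
      (t.truncGE i).map ((t.truncLTι (i + 1)).app E) ≫ g ≫
        ((t.truncGEπ k).app ((t.truncLT (k + 1)).obj F))⟦m⟧' = f :=
    exists_mor₁_comp_comp_shift_mor₂_eq hT hU h₃ h₂ f
  have hgι : ((t.truncLTι (i + 1)).app E ≫ (t.truncGEπ i).app E ≫ g) ≫
      ((t.truncLTι (k + 1)).app F)⟦m⟧' = 0 := by
    rw [Category.assoc, Category.assoc]
    exact (congrArg _ (h₀ _)).trans comp_zero
  have hg : (t.truncLTι (i + 1)).app E ≫ (t.truncGEπ i).app E ≫ g = 0 :=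
    eq_zero_of_comp_shift_mor₁_eq_zero t (t.triangleLTGE_distinguished (k + 1) F) (p := i)
      inferInstance inferInstance him hgι
  have hπ : (t.truncGEπ i).app ((t.truncLT (i + 1)).obj E) ≫
      (t.truncGE i).map ((t.truncLTι (i + 1)).app E) =
        (t.truncLTι (i + 1)).app E ≫ (t.truncGEπ i).app E :=
    t.truncGEπ_naturality i _
  have hf : (t.truncGEπ i).app ((t.truncLT (i + 1)).obj E) ≫
      (t.truncGE i).map ((t.truncLTι (i + 1)).app E) ≫ g ≫
        ((t.truncGEπ k).app ((t.truncLT (k + 1)).obj F))⟦m⟧' = 0 := by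
    rw [reassoc_of% hπ, reassoc_of% hg, zero_comp]
  exact eq_zero_of_mor₂_comp_eq_zero t (t.triangleLTGE_distinguished i _) (p := i - 1)
    (q := k - m) inferInstance (t.isGE_shift (gradedPiece t k F) k m _) (by lia) hf

lemma hom_tCohomology_eq_zero {E F : C} (hE : t.minus E) (hF : t.plus F) {i j m p : ℤ}
    (hp : p ≤ 1) (hm : m + i = p + j) (h₀ : ∀ f : E ⟶ F⟦m⟧, f = 0)
    (hV : ∀ a b, b - a < j - i → GradedOrthogonal (tCohomology t a E) (tCohomology t b F))
    (f : tCohomology t i E ⟶ (tCohomology t j F)⟦p⟧) : f = 0 := by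
  simp only [GradedOrthogonal.shift_left_iff, GradedOrthogonal.shift_right_iff] at hV
  exact (hom_shift_eq_zero_iff (by lia)).2
    (fun f ↦ hom_gradedPiece_eq_zero t hE hF (by lia) h₀ hV f) f

theorem gradedOrthogonal_tCohomology_of_lt {E F : C} (hE : t.minus E) (hF : t.plus F)
    (hvan : ∀ n : ℤ, n ≤ 0 → ∀ f : E ⟶ F⟦n⟧, f = 0)
    (hS : ∀ i j, (∀ f : tCohomology t i E ⟶ tCohomology t j F, f = 0) →
      (∀ f : tCohomology t i E ⟶ (tCohomology t j F)⟦(1 : ℤ)⟧, f = 0) →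
      GradedOrthogonal (tCohomology t i E) (tCohomology t j F))
    {i j : ℤ} (hij : j < i) : GradedOrthogonal (tCohomology t i E) (tCohomology t j F) := by
  obtain ⟨b, _⟩ := id hE
  obtain ⟨c, _⟩ := id hF
  obtain ⟨N, hN⟩ : ∃ N : ℕ, j - i < c - b + N := ⟨(j - i - (c - b) + 1).toNat, by lia⟩
  induction N generalizing i j with
  | zero =>
    intro n f
    by_cases hi : b < i
    · exact (isZero_tCohomology_of_isLE t hi).eq_of_src _ _
    · exact ((shiftFunctor C n).map_isZero
        (isZero_tCohomology_of_isGE (c := c) t (by lia))).eq_of_tgt _ _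
  | succ N ih =>
    have hV : ∀ a a', a' - a < j - i →
        GradedOrthogonal (tCohomology t a E) (tCohomology t a' F) :=
      fun a a' ha ↦ ih (by lia) (by lia)
    exact hS i j
      (hom_eq_zero_of_hom_shift_zero_eq_zero
        (hom_tCohomology_eq_zero t hE hF zero_le_one (by lia) (hvan (j - i) (by lia)) hV))
      (hom_tCohomology_eq_zero t hE hF le_rfl (by lia) (hvan (j - i + 1) (by lia)) hV)

theorem hom_tCohomology_self_eq_zero {E F : C} (hE : t.minus E) (hF : t.plus F)
    (h₀ : ∀ f : E ⟶ F⟦(0 : ℤ)⟧, f = 0)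
    (hV : ∀ a b, b < a → GradedOrthogonal (tCohomology t a E) (tCohomology t b F))
    (i : ℤ) (f : tCohomology t i E ⟶ tCohomology t i F) : f = 0 :=
  hom_eq_zero_of_hom_shift_zero_eq_zero
    (hom_tCohomology_eq_zero t hE hF zero_le_one rfl h₀ fun a b hab ↦ hV a b (by lia)) f

end TStructure

section DerivedCategory

open Pretriangulated Triangulated

variable {𝒜 : Type u} [Category.{v} 𝒜] [Abelian 𝒜] [HasDerivedCategory.{w} 𝒜]

lemma isIso_homologyMap_mor₁ {T : Triangle (DerivedCategory 𝒜)} (hT : T ∈ distTriang _) (n : ℤ)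
    (h : IsZero ((homologyFunctor 𝒜 (n - 1)).obj T.obj₃))
    (h' : IsZero ((homologyFunctor 𝒜 n).obj T.obj₃)) :
    IsIso ((homologyFunctor 𝒜 n).map T.mor₁) := by
  have := (HomologySequence.mono_homologyMap_mor₁_iff T hT (n - 1) n).2 (h.eq_of_src _ _)
  have := (HomologySequence.epi_homologyMap_mor₁_iff T hT n).2 (h'.eq_of_tgt _ _)
  exact isIso_of_mono_of_epi _

lemma isIso_homologyMap_mor₂ {T : Triangle (DerivedCategory 𝒜)} (hT : T ∈ distTriang _) (n : ℤ)
    (h : IsZero ((homologyFunctor 𝒜 n).obj T.obj₁))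
    (h' : IsZero ((homologyFunctor 𝒜 (n + 1)).obj T.obj₁)) :
    IsIso ((homologyFunctor 𝒜 n).map T.mor₂) := by
  have := (HomologySequence.mono_homologyMap_mor₂_iff T hT n).2 (h.eq_of_src _ _)
  have := (HomologySequence.epi_homologyMap_mor₂_iff T hT n (n + 1)).2 (h'.eq_of_tgt _ _)
  exact isIso_of_mono_of_epi _

lemma nonempty_homology_gradedPiece_iso (n : ℤ) (X : DerivedCategory 𝒜) :
    Nonempty ((homologyFunctor 𝒜 n).obj (gradedPiece TStructure.t n X) ≅
      (homologyFunctor 𝒜 n).obj X) := by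
  let t : TStructure (DerivedCategory 𝒜) := TStructure.t
  have h₁ : IsIso ((homologyFunctor 𝒜 n).map ((t.truncLTι (n + 1)).app X)) := by
    have : ((t.truncGE (n + 1)).obj X).IsGE (n + 1) := inferInstanceAs (t.IsGE _ _)
    exact isIso_homologyMap_mor₁ (t.triangleLTGE_distinguished (n + 1) X) n
      (isZero_of_isGE _ (n + 1) _ (by lia)) (isZero_of_isGE _ (n + 1) _ (by lia))
  have h₂ : IsIso ((homologyFunctor 𝒜 n).map ((t.truncGEπ n).app ((t.truncLT (n + 1)).obj X))) := by
    have : ((t.truncLT n).obj ((t.truncLT (n + 1)).obj X)).IsLE (n - 1) :=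
      inferInstanceAs (t.IsLE _ _)
    exact isIso_homologyMap_mor₂ (t.triangleLTGE_distinguished n _) n
      (isZero_of_isLE _ (n - 1) _ (by lia)) (isZero_of_isLE _ (n - 1) _ (by lia))
  exact ⟨(asIso ((homologyFunctor 𝒜 n).map ((t.truncGEπ n).app _))).symm ≪≫
    asIso ((homologyFunctor 𝒜 n).map ((t.truncLTι (n + 1)).app X))⟩

lemma nonempty_tCohomology_iso (n : ℤ) (X : DerivedCategory 𝒜) :
    Nonempty (tCohomology TStructure.t n X ≅
      (singleFunctor 𝒜 0).obj ((homologyFunctor 𝒜 n).obj X)) := by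
  obtain ⟨homologyIso⟩ := nonempty_homology_gradedPiece_iso n X
  have : (gradedPiece TStructure.t n X).IsGE n :=
    inferInstanceAs (TStructure.t.IsGE (gradedPiece TStructure.t n X) n)
  have : (gradedPiece TStructure.t n X).IsLE n :=
    inferInstanceAs (TStructure.t.IsLE (gradedPiece TStructure.t n X) n)
  obtain ⟨A, ⟨pieceIso⟩⟩ :=
    exists_iso_singleFunctor_obj_of_isGE_of_isLE (gradedPiece TStructure.t n X) n
  let heartIso : A ≅ (homologyFunctor 𝒜 n).obj X :=
    (singleFunctorCompHomologyFunctorIso 𝒜 n).symm.app A ≪≫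
      (homologyFunctor 𝒜 n).mapIso pieceIso.symm ≪≫ homologyIso
  exact ⟨(shiftFunctor _ n).mapIso pieceIso ≪≫
    ((singleFunctors 𝒜).shiftIso n 0 n (by lia)).app A ≪≫ (singleFunctor 𝒜 0).mapIso heartIso⟩

lemma IsBoundedComplex.minus {X : DerivedCategory 𝒜} (hX : IsBoundedComplex 𝒜 X) :
    TStructure.t.minus X := by
  obtain ⟨_, b, h⟩ := hX
  exact ⟨b, (isLE_iff X b).2 fun i hi ↦ h i (Or.inr hi)⟩

lemma IsBoundedComplex.plus {X : DerivedCategory 𝒜} (hX : IsBoundedComplex 𝒜 X) :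
    TStructure.t.plus X := by
  obtain ⟨a, _, h⟩ := hX
  exact ⟨a, (isGE_iff X a).2 fun i hi ↦ h i (Or.inl hi)⟩

end DerivedCategory

theorem stmt1_general {𝒜 : Type u} [Category.{v} 𝒜] [Abelian 𝒜] [HasDerivedCategory.{w} 𝒜]
    (A₀ : Set 𝒜) (hAH : AlmostHereditary 𝒜 A₀)
    (E F : DerivedCategory 𝒜) (hEminus : TStructure.t.minus E) (hFplus : TStructure.t.plus F)
    (hE : ∀ i : ℤ, (DerivedCategory.homologyFunctor 𝒜 i).obj E ∈ A₀)
    (hF : ∀ i : ℤ, (DerivedCategory.homologyFunctor 𝒜 i).obj F ∈ A₀)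
    (hvan : ∀ n : ℤ, n ≤ 0 → ∀ f : E ⟶ F⟦n⟧, f = 0) :
    (∀ (i p n : ℤ), 1 ≤ n →
      ∀ f : degZero 𝒜 ((DerivedCategory.homologyFunctor 𝒜 i).obj E) ⟶
        (degZero 𝒜 ((DerivedCategory.homologyFunctor 𝒜 (i - n)).obj F))⟦p⟧, f = 0) ∧
    (∀ i : ℤ,
      ∀ f : degZero 𝒜 ((DerivedCategory.homologyFunctor 𝒜 i).obj E) ⟶
        degZero 𝒜 ((DerivedCategory.homologyFunctor 𝒜 i).obj F), f = 0) := by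
  have cohomologyIso (n : ℤ) (X : DerivedCategory 𝒜) := (nonempty_tCohomology_iso n X).some
  have hS (i j : ℤ) (h₀ : ∀ f : tCohomology TStructure.t i E ⟶ tCohomology TStructure.t j F, f = 0)
      (h₁ : ∀ f : tCohomology TStructure.t i E ⟶ (tCohomology TStructure.t j F)⟦(1 : ℤ)⟧, f = 0) :
      GradedOrthogonal (tCohomology TStructure.t i E) (tCohomology TStructure.t j F) :=
    GradedOrthogonal.of_iso
      (hAH _ _ (hE i) (hF j)
        (hom_eq_zero_of_iso (cohomologyIso i E) (cohomologyIso j F) h₀)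
        (hom_eq_zero_of_iso (cohomologyIso i E)
          ((shiftFunctor _ (1 : ℤ)).mapIso (cohomologyIso j F)) h₁))
      (cohomologyIso i E).symm (cohomologyIso j F).symm
  have hlt {i j : ℤ} (hij : j < i) :=
    gradedOrthogonal_tCohomology_of_lt TStructure.t hEminus hFplus hvan hS hij
  exact ⟨fun i p n hn ↦ (hlt (by lia)).of_iso (cohomologyIso i E) (cohomologyIso (i - n) F) p,
    fun i ↦ hom_eq_zero_of_iso (cohomologyIso i E) (cohomologyIso i F)
      (hom_tCohomology_self_eq_zero TStructure.t hEminus hFplus (hvan 0 le_rfl)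
        (fun _ _ ↦ hlt) i)⟩

theorem stmt1 {𝒜 : Type u} [Category.{v} 𝒜] [Abelian 𝒜] [HasDerivedCategory.{w} 𝒜]
    (A₀ : Set 𝒜) (hA₀ : IsAbelianSubcategory 𝒜 A₀) (hAH : AlmostHereditary 𝒜 A₀)
    (E F : DerivedCategory 𝒜)
    (hEbdd : IsBoundedComplex 𝒜 E) (hFbdd : IsBoundedComplex 𝒜 F)
    (hE : ∀ i : ℤ, (DerivedCategory.homologyFunctor 𝒜 i).obj E ∈ A₀)
    (hF : ∀ i : ℤ, (DerivedCategory.homologyFunctor 𝒜 i).obj F ∈ A₀)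
    (hvan : ∀ n : ℤ, n ≤ 0 → ∀ f : E ⟶ F⟦n⟧, f = 0) :
    (∀ (i p n : ℤ), 1 ≤ n →
      ∀ f : degZero 𝒜 ((DerivedCategory.homologyFunctor 𝒜 i).obj E) ⟶
        (degZero 𝒜 ((DerivedCategory.homologyFunctor 𝒜 (i - n)).obj F))⟦p⟧, f = 0) ∧
    (∀ i : ℤ,
      ∀ f : degZero 𝒜 ((DerivedCategory.homologyFunctor 𝒜 i).obj E) ⟶
        degZero 𝒜 ((DerivedCategory.homologyFunctor 𝒜 i).obj F), f = 0) :=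
  stmt1_general A₀ hAH E F hEbdd.minus hFbdd.plus hE hF hvan
end

section
/- Let 𝒜 be an abelian category and let 𝒜₀ ⊆ 𝒜 be a full abelian subcategory which is almost hereditary in 𝒜. Let E be a nonzero object of D^b(𝒜) all of whose cohomology objects lie in 𝒜₀, and set m₀ = max{ i ∈ ℤ : H^i(E) ≠ 0 }. If Hom^n(E, E) = 0 for all integers n < 0 and Hom^1(H^{m₀}(E), H^{m₀−1}(E)) ≠ 0, then there exists a nonzero morphism ψ : E → E in D^b(𝒜) with ψ ∘ ψ = 0. -/
open CategoryTheory Limits DerivedCategory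

universe w v u

/-!
Write `K_j = τ^{<j+1} τ^{≥j} E = H^j(E)[-j]` and `H = τ^{≥m} E = K_m`, where `m` is the top degree
of `E`. If a nonzero morphism `H ⟶ K_j⟦n⟧` lifts to `τ^{<j+1} E`, then for `n ≤ j - m + 1` the
composition `E ⟶ H ⟶ (τ^{<j+1} E)⟦n⟧ ⟶ E⟦n⟧` is nonzero: a morphism killed by one of the two outer
maps would factor through a morphism that vanishes by the axioms of a t-structure. As `E` has no
negative self-extensions, this and almost heredity kill, by induction on `j < m`, all morphisms from
`H` to shifts of `τ^{<j} E`. Hence a nonzero element of `Ext¹(H^m(E), H^{m-1}(E)) = Hom(H, K_{m-1})`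
lifts to `τ^{<m} E`, and the resulting endomorphism `E ⟶ τ^{≥m} E ⟶ τ^{<m} E ⟶ E` is nonzero and
squares to zero because `τ^{<m} E ⟶ E ⟶ τ^{≥m} E` is.
-/

open Opposite Pretriangulated Triangulated

section Shift

variable {C : Type*} [Category C] [Preadditive C] [HasShift C ℤ] {X X' Y Y' : C} {n : ℤ}

/-- The vanishing of `Homⁿ(X, Y) = Hom(X, Y⟦n⟧)`, in the form in which vanishing of graded
morphism groups appears in `AlmostHereditary`. -/
def HomVanishes (X Y : C) (n : ℤ) : Prop := ∀ f : X ⟶ Y⟦n⟧, f = 0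

lemma homVanishes_congr (e : X ≅ X') (e' : Y ≅ Y') :
    HomVanishes X Y n ↔ HomVanishes X' Y' n := by
  let φ : (X ⟶ Y⟦n⟧) ≃ (X' ⟶ Y'⟦n⟧) := e.homCongr ((shiftFunctor C n).mapIso e')
  have hφ : φ 0 = 0 := by simp [φ]
  exact φ.forall_congr fun f ↦ by rw [← hφ, φ.apply_eq_iff_eq]

lemma homVanishes_zero_iff : HomVanishes X Y 0 ↔ ∀ f : X ⟶ Y, f = 0 := by
  let φ : (X ⟶ Y⟦(0 : ℤ)⟧) ≃ (X ⟶ Y) := (Iso.refl X).homCongr ((shiftFunctorZero C ℤ).app Y)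
  have hφ : φ 0 = 0 := by simp [φ]
  exact φ.forall_congr fun f ↦ by rw [← hφ, φ.apply_eq_iff_eq]

lemma homVanishes_shift_iff [∀ k : ℤ, (shiftFunctor C k).Additive] {a b n' : ℤ}
    (h : n' + a = b + n) : HomVanishes (X⟦a⟧) (Y⟦b⟧) n ↔ HomVanishes X Y n' := by
  let e : Y⟦n'⟧⟦a⟧ ≅ Y⟦b⟧⟦n⟧ :=
    ((shiftFunctorAdd' C n' a _ h).app Y).symm ≪≫ (shiftFunctorAdd C b n).app Y
  let φ : (X ⟶ Y⟦n'⟧) ≃ (X⟦a⟧ ⟶ Y⟦b⟧⟦n⟧) :=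
    (Functor.FullyFaithful.ofFullyFaithful (shiftFunctor C a)).homEquiv.trans
      ((Iso.refl _).homCongr e)
  have hφ : φ 0 = 0 := by simp [φ, Functor.FullyFaithful.homEquiv]
  exact (φ.forall_congr fun f ↦ by rw [← hφ, φ.apply_eq_iff_eq]).symm

lemma homVanishes_of_isZero_right [∀ k : ℤ, (shiftFunctor C k).Additive] (hY : IsZero Y) :
    HomVanishes X Y n :=
  fun _ ↦ ((shiftFunctor C n).map_isZero hY).eq_of_tgt _ _

end Shift

section LongExactSequence

variable {C : Type*} [Category C] [Preadditive C] [HasZeroObject C] [HasShift C ℤ]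
  [∀ k : ℤ, (shiftFunctor C k).Additive] [Pretriangulated C] {T : Triangle C} {X : C} {n : ℤ}

lemma HomVanishes.obj₂ (hT : T ∈ distTriang C) (h₁ : HomVanishes X T.obj₁ n)
    (h₃ : HomVanishes X T.obj₃ n) : HomVanishes X T.obj₂ n := by
  intro f
  obtain ⟨g, rfl⟩ := ShortComplex.ab_exact_iff _ |>.1
    ((preadditiveCoyoneda.obj (op X)).homologySequence_exact₂ T hT n) f (h₃ _)
  exact (congrArg _ (h₁ g)).trans (map_zero _)

lemma exists_comp_shift_mor₂_eq (hT : T ∈ distTriang C) (h₁ : HomVanishes X T.obj₁ (n + 1))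
    (f : X ⟶ T.obj₃⟦n⟧) : ∃ g : X ⟶ T.obj₂⟦n⟧, g ≫ T.mor₂⟦n⟧' = f :=
  ShortComplex.ab_exact_iff _ |>.1
    ((preadditiveCoyoneda.obj (op X)).homologySequence_exact₃ T hT n (n + 1) rfl) f (h₁ _)

lemma eq_zero_of_comp_shift_mor₁_eq_zero_s2 (hT : T ∈ distTriang C)
    (h₃ : HomVanishes X T.obj₃ (n - 1)) {g : X ⟶ T.obj₁⟦n⟧} (hg : g ≫ T.mor₁⟦n⟧' = 0) :
    g = 0 := by
  obtain ⟨f, rfl⟩ := ShortComplex.ab_exact_iff _ |>.1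
    ((preadditiveCoyoneda.obj (op X)).homologySequence_exact₁ T hT (n - 1) n (by lia)) g hg
  exact (congrArg _ (h₃ f)).trans (map_zero _)

end LongExactSequence

section TStructure

variable {C : Type*} [Category C] [Preadditive C] [HasZeroObject C] [HasShift C ℤ]
  [∀ k : ℤ, (shiftFunctor C k).Additive] [Pretriangulated C] (t : TStructure C)

lemma homVanishes_of_isLE_of_isGE {X Y : C} {a b n : ℤ} [t.IsLE X a] [t.IsGE Y b]
    (h : a + n < b) : HomVanishes X Y n := fun f ↦ by
  have := t.isGE_shift Y b n (b - n)
  exact t.zero f a (b - n)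

lemma eq_zero_of_truncGEπ_comp_eq_zero {X Y : C} {m : ℤ} [t.IsGE Y (m - 1)]
    {f : (t.truncGE m).obj X ⟶ Y} (hf : (t.truncGEπ m).app X ≫ f = 0) : f = 0 := by
  obtain ⟨g, rfl⟩ := Triangle.yoneda_exact₃ _ (t.triangleLTGE_distinguished m X) f hf
  have := t.isLE_shift ((t.triangleLTGE m).obj X).obj₁ (m - 1) 1 (m - 2)
  exact (_ ≫= t.zero g (m - 2) (m - 1)).trans comp_zero

lemma eq_zero_of_comp_shift_truncLTι_eq_zero {X E : C} {m b n : ℤ} [t.IsLE X m] (hn : n ≤ b - m)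
    {g : X ⟶ ((t.truncLT b).obj E)⟦n⟧} (hg : g ≫ ((t.truncLTι b).app E)⟦n⟧' = 0) : g = 0 :=
  eq_zero_of_comp_shift_mor₁_eq_zero_s2 (t.triangleLTGE_distinguished b E)
    (homVanishes_of_isLE_of_isGE t (a := m) (b := b) (by lia)) hg

variable [IsTriangulated C] {E : C} {m : ℤ} [t.IsLE E m]

lemma exists_truncGEπ_comp_comp_shift_truncLTι_ne_zero {a b n : ℤ} (hab : a ≤ b)
    (hb : n ≤ b - m) (ha : n ≤ a - m + 1)
    (hlift : HomVanishes ((t.truncGE m).obj E) ((t.truncLT a).obj E) (n + 1))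
    (hne : ¬ HomVanishes ((t.truncGE m).obj E) ((t.truncGELT a b).obj E) n) :
    ∃ g : (t.truncGE m).obj E ⟶ ((t.truncLT b).obj E)⟦n⟧,
      (t.truncGEπ m).app E ≫ g ≫ ((t.truncLTι b).app E)⟦n⟧' ≠ 0 := by
  obtain ⟨f, hf⟩ := not_forall.1 hne
  obtain ⟨g, rfl⟩ :=
    exists_comp_shift_mor₂_eq (t.triangleLTLTGELT_distinguished a b hab E) hlift f
  refine ⟨g, fun hg ↦ hf ?_⟩
  have hπg : (t.truncGEπ m).app E ≫ g = 0 :=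
    eq_zero_of_comp_shift_truncLTι_eq_zero t (X := E) hb ((Category.assoc _ _ _).trans hg)
  have := t.isGE_shift ((t.truncGELT a b).obj E) a n (a - n)
  have := t.isGE_of_ge (((t.truncGELT a b).obj E)⟦n⟧) (m - 1) (a - n)
  exact eq_zero_of_truncGEπ_comp_eq_zero t (Y := ((t.truncGELT a b).obj E)⟦n⟧)
    ((Category.assoc _ _ _).symm.trans ((hπg =≫ _).trans zero_comp))

lemma homVanishes_truncGE_truncLT {a : ℤ} [t.IsGE E a] (hneg : ∀ n < 0, HomVanishes E E n)
    (hhered : ∀ j : ℤ, HomVanishes ((t.truncGE m).obj E) ((t.truncGELT j (j + 1)).obj E) (j - m) →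
      HomVanishes ((t.truncGE m).obj E) ((t.truncGELT j (j + 1)).obj E) (j - m + 1) →
      ∀ n, HomVanishes ((t.truncGE m).obj E) ((t.truncGELT j (j + 1)).obj E) n)
    {j : ℤ} (haj : a ≤ j) (hjm : j < m) (n : ℤ) :
    HomVanishes ((t.truncGE m).obj E) ((t.truncLT j).obj E) n := by
  induction j, haj using Int.leInduction generalizing n with
  | base => exact homVanishes_of_isZero_right (t.isZero_truncLT_obj_of_isGE a E)
  | succ j _ ih =>
    have hlt := ih (by lia)
    have hpiece {k : ℤ} (hk : k < 0) (hk' : k ≤ j - m + 1) :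
        HomVanishes ((t.truncGE m).obj E) ((t.truncGELT j (j + 1)).obj E) k := by
      by_contra hne
      obtain ⟨g, hg⟩ := exists_truncGEπ_comp_comp_shift_truncLTι_ne_zero t
        (Int.le_add_one le_rfl) (by lia) hk' (hlt _) hne
      exact hg (hneg k hk _)
    exact HomVanishes.obj₂ (t.triangleLTLTGELT_distinguished j (j + 1) (by lia) E) (hlt n)
      (hhered j (hpiece (by lia) (by lia)) (hpiece (by lia) le_rfl) n)

theorem exists_ne_zero_comp_self_eq_zero {a : ℤ} [t.IsGE E a]
    (hneg : ∀ n < 0, HomVanishes E E n)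
    (hhered : ∀ j : ℤ, HomVanishes ((t.truncGE m).obj E) ((t.truncGELT j (j + 1)).obj E) (j - m) →
      HomVanishes ((t.truncGE m).obj E) ((t.truncGELT j (j + 1)).obj E) (j - m + 1) →
      ∀ n, HomVanishes ((t.truncGE m).obj E) ((t.truncGELT j (j + 1)).obj E) n)
    (hne : ¬ HomVanishes ((t.truncGE m).obj E) ((t.truncGELT (m - 1) m).obj E) 0) :
    ∃ ψ : E ⟶ E, ψ ≠ 0 ∧ ψ ≫ ψ = 0 := by
  have := t.isGE_of_ge E (min a (m - 1)) a
  have hlift := homVanishes_truncGE_truncLT t hneg hhered (min_le_right a (m - 1)) (by lia)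
  obtain ⟨g, hg⟩ := exists_truncGEπ_comp_comp_shift_truncLTι_ne_zero t
    (sub_one_lt m).le (by lia) (by lia) (hlift _) hne
  let g₀ : (t.truncGE m).obj E ⟶ (t.truncLT m).obj E := g ≫ (shiftFunctorZero C ℤ).hom.app _
  refine ⟨(t.truncGEπ m).app E ≫ g₀ ≫ (t.truncLTι m).app E, fun h ↦ hg ?_, by simp⟩
  rw [← cancel_mono ((shiftFunctorZero C ℤ).hom.app E)]
  simpa [g₀] using h

end TStructure

section DerivedCategory

variable {𝒜 : Type u} [Category.{v} 𝒜] [Abelian 𝒜] [HasDerivedCategory.{w} 𝒜]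

lemma isIso_homologyFunctor_map_truncGEπ_app (E : DerivedCategory 𝒜) (j : ℤ) :
    IsIso ((homologyFunctor 𝒜 j).map ((TStructure.t.truncGEπ j).app E)) := by
  have hT := TStructure.t.triangleLTGE_distinguished j E
  have : ((TStructure.t.truncLT j).obj E).IsLE (j - 1) := inferInstance
  have : Mono ((homologyFunctor 𝒜 j).map ((TStructure.t.truncGEπ j).app E)) :=
    (HomologySequence.mono_homologyMap_mor₂_iff _ hT j).2
      ((isZero_of_isLE _ (j - 1) j (by lia)).eq_of_src _ _)
  have : Epi ((homologyFunctor 𝒜 j).map ((TStructure.t.truncGEπ j).app E)) :=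
    (HomologySequence.epi_homologyMap_mor₂_iff _ hT j (j + 1)).2
      ((isZero_of_isLE _ (j - 1) (j + 1) (by lia)).eq_of_tgt _ _)
  exact isIso_of_mono_of_epi _

lemma isIso_homologyFunctor_map_truncLTι_app (E : DerivedCategory 𝒜) {j b : ℤ} (hjb : j < b) :
    IsIso ((homologyFunctor 𝒜 j).map ((TStructure.t.truncLTι b).app E)) := by
  have hT := TStructure.t.triangleLTGE_distinguished b E
  have : ((TStructure.t.truncGE b).obj E).IsGE b := inferInstance
  have : Epi ((homologyFunctor 𝒜 j).map ((TStructure.t.truncLTι b).app E)) :=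
    (HomologySequence.epi_homologyMap_mor₁_iff _ hT j).2
      ((isZero_of_isGE _ b j hjb).eq_of_tgt _ _)
  have : Mono ((homologyFunctor 𝒜 j).map ((TStructure.t.truncLTι b).app E)) :=
    (HomologySequence.mono_homologyMap_mor₁_iff _ hT (j - 1) j).2
      ((isZero_of_isGE _ b (j - 1) (by lia)).eq_of_src _ _)
  exact isIso_of_mono_of_epi _

lemma nonempty_iso_singleFunctor_homologyFunctor (X : DerivedCategory 𝒜) (j : ℤ) [X.IsGE j]
    [X.IsLE j] : Nonempty (X ≅ (singleFunctor 𝒜 j).obj ((homologyFunctor 𝒜 j).obj X)) := by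
  obtain ⟨Y, ⟨e⟩⟩ := exists_iso_singleFunctor_obj_of_isGE_of_isLE X j
  let eY : (homologyFunctor 𝒜 j).obj X ≅ Y :=
    (homologyFunctor 𝒜 j).mapIso e ≪≫ (singleFunctorCompHomologyFunctorIso 𝒜 j).app Y
  exact ⟨e ≪≫ (singleFunctor 𝒜 j).mapIso eY.symm⟩

lemma nonempty_truncGE_iso_singleFunctor (E : DerivedCategory 𝒜) (m : ℤ) [E.IsLE m] :
    Nonempty ((TStructure.t.truncGE m).obj E ≅
      (singleFunctor 𝒜 m).obj ((homologyFunctor 𝒜 m).obj E)) := by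
  have := isIso_homologyFunctor_map_truncGEπ_app E m
  obtain ⟨e⟩ := nonempty_iso_singleFunctor_homologyFunctor ((TStructure.t.truncGE m).obj E) m
  exact ⟨e ≪≫ (singleFunctor 𝒜 m).mapIso
    (asIso ((homologyFunctor 𝒜 m).map ((TStructure.t.truncGEπ m).app E))).symm⟩

lemma nonempty_truncGELT_iso_singleFunctor (E : DerivedCategory 𝒜) {j b : ℤ} (h : j + 1 = b) :
    Nonempty ((TStructure.t.truncGELT j b).obj E ≅
      (singleFunctor 𝒜 j).obj ((homologyFunctor 𝒜 j).obj E)) := by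
  have : ((TStructure.t.truncLT b).obj E).IsLE j := TStructure.t.isLE_truncLT_obj E b j
  have := isIso_homologyFunctor_map_truncLTι_app E (show j < b by lia)
  obtain ⟨e⟩ := nonempty_truncGE_iso_singleFunctor ((TStructure.t.truncLT b).obj E) j
  exact ⟨e ≪≫ (singleFunctor 𝒜 j).mapIso
    (asIso ((homologyFunctor 𝒜 j).map ((TStructure.t.truncLTι b).app E)))⟩

lemma homVanishes_singleFunctor_iff {A B : 𝒜} {m j n p : ℤ} (h : n + m = j + p) :
    HomVanishes ((singleFunctor 𝒜 m).obj A) ((singleFunctor 𝒜 j).obj B) n ↔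
      HomVanishes (degZero 𝒜 A) (degZero 𝒜 B) p :=
  (homVanishes_shift_iff h).symm.trans
    (homVanishes_congr (((singleFunctors 𝒜).shiftIso m 0 m (by lia)).app A)
      (((singleFunctors 𝒜).shiftIso j 0 j (by lia)).app B))

lemma AlmostHereditary.homVanishes_singleFunctor {A₀ : Set 𝒜} (hA₀ : AlmostHereditary 𝒜 A₀)
    {A B : 𝒜} (hA : A ∈ A₀) (hB : B ∈ A₀) {m j : ℤ}
    (h₀ : HomVanishes ((singleFunctor 𝒜 m).obj A) ((singleFunctor 𝒜 j).obj B) (j - m))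
    (h₁ : HomVanishes ((singleFunctor 𝒜 m).obj A) ((singleFunctor 𝒜 j).obj B) (j - m + 1))
    (n : ℤ) : HomVanishes ((singleFunctor 𝒜 m).obj A) ((singleFunctor 𝒜 j).obj B) n :=
  (homVanishes_singleFunctor_iff (p := n + m - j) (by lia)).2 <| hA₀ A B hA hB
    (homVanishes_zero_iff.1 ((homVanishes_singleFunctor_iff (by lia)).1 h₀))
    ((homVanishes_singleFunctor_iff (by lia)).1 h₁) _

end DerivedCategory

theorem stmt2_general {𝒜 : Type u} [Category.{v} 𝒜] [Abelian 𝒜] [HasDerivedCategory.{w} 𝒜]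
    (A₀ : Set 𝒜) (hAH : AlmostHereditary 𝒜 A₀) (E : DerivedCategory 𝒜)
    (hbelow : ∃ a : ℤ, ∀ i < a, IsZero ((homologyFunctor 𝒜 i).obj E))
    (hE : ∀ i : ℤ, (homologyFunctor 𝒜 i).obj E ∈ A₀)
    (m₀ : ℤ) (hm₀max : ∀ i : ℤ, m₀ < i → IsZero ((homologyFunctor 𝒜 i).obj E))
    (hvan : ∀ n : ℤ, n < 0 → ∀ f : E ⟶ E⟦n⟧, f = 0)
    (hext : ∃ f : degZero 𝒜 ((homologyFunctor 𝒜 m₀).obj E) ⟶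
      (degZero 𝒜 ((homologyFunctor 𝒜 (m₀ - 1)).obj E))⟦(1 : ℤ)⟧, f ≠ 0) :
    ∃ ψ : E ⟶ E, ψ ≠ 0 ∧ ψ ≫ ψ = 0 := by
  obtain ⟨a, ha⟩ := hbelow
  have : E.IsGE a := (isGE_iff E a).2 ha
  have : E.IsLE m₀ := (isLE_iff E m₀).2 hm₀max
  obtain ⟨eTop⟩ := nonempty_truncGE_iso_singleFunctor E m₀
  have hpiece {j b : ℤ} (h : j + 1 = b) (n : ℤ) :=
    let ⟨e⟩ := nonempty_truncGELT_iso_singleFunctor E h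
    homVanishes_congr (n := n) eTop e
  refine exists_ne_zero_comp_self_eq_zero TStructure.t (a := a) (m := m₀) hvan
    (fun j h₀ h₁ n ↦ ?_) ?_
  · rw [hpiece rfl] at h₀ h₁ ⊢
    exact hAH.homVanishes_singleFunctor (hE m₀) (hE j) h₀ h₁ n
  · rw [hpiece (by lia), homVanishes_singleFunctor_iff (p := 1) (by lia)]
    exact not_forall.2 hext

theorem stmt2 {𝒜 : Type u} [Category.{v} 𝒜] [Abelian 𝒜] [HasDerivedCategory.{w} 𝒜]
    (A₀ : Set 𝒜) (hA₀ : IsAbelianSubcategory 𝒜 A₀) (hAH : AlmostHereditary 𝒜 A₀)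
    (E : DerivedCategory 𝒜) (hE0 : ¬ IsZero E)
    (hEbdd : IsBoundedComplex 𝒜 E)
    (hE : ∀ i : ℤ, (DerivedCategory.homologyFunctor 𝒜 i).obj E ∈ A₀)
    -- `m₀` is the maximal integer such that `H^{m₀}(E) ≠ 0`
    (m₀ : ℤ) (hm₀ : ¬ IsZero ((DerivedCategory.homologyFunctor 𝒜 m₀).obj E))
    (hm₀max : ∀ i : ℤ, m₀ < i → IsZero ((DerivedCategory.homologyFunctor 𝒜 i).obj E))
    -- `Hom^n(E,E) = 0` for all `n < 0`
    (hvan : ∀ n : ℤ, n < 0 → ∀ f : E ⟶ E⟦n⟧, f = 0)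
    -- `Hom^1(H^{m₀}(E), H^{m₀-1}(E)) ≠ 0`
    (hext : ∃ f : degZero 𝒜 ((DerivedCategory.homologyFunctor 𝒜 m₀).obj E) ⟶
      (degZero 𝒜 ((DerivedCategory.homologyFunctor 𝒜 (m₀ - 1)).obj E))⟦(1 : ℤ)⟧, f ≠ 0) :
    ∃ ψ : E ⟶ E, ψ ≠ 0 ∧ ψ ≫ ψ = 0 := by
  obtain ⟨a, _, hab⟩ := hEbdd
  exact stmt2_general A₀ hAH E ⟨a, fun i hi ↦ hab i (.inl hi)⟩ hE m₀ hm₀max hvan hext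
end

section
/- Let 𝒜 be an abelian category and let 𝒜₀ ⊆ 𝒜 be a full abelian subcategory which is almost hereditary in 𝒜. Let E be a nonzero object of D^b(𝒜) all of whose cohomology objects lie in 𝒜₀. Assume that (a) Hom^n(E, E) = 0 for all integers n < 0, and (b) every nonzero endomorphism of E in D^b(𝒜) is an isomorphism. Then there exist an object A of 𝒜₀ and an integer m such that E ≅ A[m] in D^b(𝒜). -/
open CategoryTheory Limits DerivedCategory

universe w v u

/-!
Let `b` be the top degree of `E` and `B = τ≥b E`. Going up from the bottom of `E`, one shows that
`B` has no nonzero morphism, in any degree, to `τ<i E` for `i ≤ b`. The inductive step concerns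
the layer `K = τ[i,i+1) E`. For `p ≥ b - i - 1`, a morphism `B⟦p⟧ ⟶ K` lifts to `τ<(i+1) E` by
induction, and `E⟦p⟧ ⟶ B⟦p⟧ ⟶ τ<(i+1) E ⟶ E` vanishes: for `p > 0` because `E` has no negative
self-extension, for `p = 0` because an automorphism of `E` cannot factor through an object
concentrated below `b`. Cancelling the outer morphisms, the original morphism vanishes. The bound
on `p` is just what makes `Hom⁰` and `Hom¹` vanish between the two cohomology objects, so almost
heredity gives the vanishing in all degrees. At `i = b`, the triangle `τ<b E ⟶ E ⟶ B` splits,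
and `τ<b E` is zero because no nonzero endomorphism of `E` factors through it.
-/

open Pretriangulated Triangulated

section Shift

variable {C : Type*} [Category* C] [HasShift C ℤ]

/-- Morphisms between shifts of `M` and `N` are the morphisms from `M` to the shift of `N` by the
difference; the shifts of `M` and `N` are given up to isomorphism. -/
noncomputable def shiftHomEquiv {M N X Y : C} {m k p q : ℤ} (e : X ≅ M⟦m⟧) (e' : Y ≅ N⟦k⟧)
    (h : m + p + q = k) : (X⟦p⟧ ⟶ Y) ≃ (M ⟶ N⟦q⟧) :=
  (Iso.homCongr ((shiftFunctor C p).mapIso e ≪≫ (shiftFunctorAdd C m p).symm.app M)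
    (e' ≪≫ (shiftFunctorAdd' C q (m + p) k (by lia)).app N)).trans
    (Functor.FullyFaithful.ofFullyFaithful (shiftFunctor C (m + p))).homEquiv.symm

lemma shift_hom_eq_zero_iff [HasZeroMorphisms C] {M N X Y : C} {m k p q : ℤ} (e : X ≅ M⟦m⟧)
    (e' : Y ≅ N⟦k⟧) (h : m + p + q = k) :
    (∀ f : X⟦p⟧ ⟶ Y, f = 0) ↔ ∀ f : M ⟶ N⟦q⟧, f = 0 := by
  rw [← subsingleton_iff_forall_eq, ← subsingleton_iff_forall_eq,
    (shiftHomEquiv e e' h).subsingleton_congr]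

/-- The objects `Y` such that every morphism from a shift of `X` to `Y` is zero. -/
abbrev shiftOrthogonal [HasZeroMorphisms C] (X : C) : ObjectProperty C :=
  ((ObjectProperty.singleton X).shiftClosure ℤ).rightOrthogonal

lemma shiftOrthogonal_iff [HasZeroMorphisms C] {X Y : C} :
    shiftOrthogonal X Y ↔ ∀ (p : ℤ) (f : X⟦p⟧ ⟶ Y), f = 0 := by
  refine ⟨fun h p f => h f ⟨X, p, Iso.refl _, ⟨⟨⟩⟩⟩, ?_⟩
  rintro h Z f ⟨_, p, e, ⟨⟨⟩⟩⟩
  rw [← cancel_epi e.inv, comp_zero]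
  exact h p _

end Shift

section TStructure

variable {C : Type*} [Category* C] [Preadditive C] [HasZeroObject C] [HasShift C ℤ]
  [∀ n : ℤ, (shiftFunctor C n).Additive] [Pretriangulated C] (t : TStructure C)

lemma isLE_of_retract {X Y : C} (r : Retract X Y) (n : ℤ) [t.IsLE Y n] : t.IsLE X n := by
  refine (t.isLE_iff_orthogonal n (n + 1) rfl X).2 fun Z f _ => ?_
  rw [← r.retract_assoc f, t.zero (r.r ≫ f) n (n + 1), comp_zero]

lemma exists_isLE_and_not_isLE_sub_one {E : C} (hE : ¬ IsZero E) (a c : ℤ) [t.IsGE E a]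
    [t.IsLE E c] : ∃ b, t.IsLE E b ∧ ¬ t.IsLE E (b - 1) := by
  have bounded_below : ∀ n, t.IsLE E n → a ≤ n := fun n _ => by
    by_contra! hn
    exact hE (t.isZero E n a)
  obtain ⟨b, hb, hmin⟩ := Int.exists_least_of_bdd ⟨a, bounded_below⟩ ⟨c, inferInstance⟩
  exact ⟨b, hb, fun h => absurd (hmin _ h) (by lia)⟩

lemma eq_zero_of_comp_truncLTι_eq_zero {X Y : C} {n : ℤ} [t.IsLE Y n]
    (g : Y ⟶ (t.truncLT n).obj X) (hg : g ≫ (t.truncLTι n).app X = 0) : g = 0 := by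
  obtain ⟨k, rfl⟩ := Triangle.coyoneda_exact₂ _
    (inv_rot_of_distTriang _ (t.triangleLTGE_distinguished n X)) g hg
  have := t.isGE_shift ((t.truncGE n).obj X) n (-1) (n + 1)
  have hk : k = 0 := t.zero_of_isLE_of_isGE k n (n + 1) (by lia) inferInstance this
  rw [hk]
  exact zero_comp

lemma eq_zero_of_shift_truncGEπ_comp_eq_zero {X Y : C} {n m p : ℤ} [t.IsGE Y m]
    (hm : n ≤ m + p + 1) (f : ((t.truncGE n).obj X)⟦p⟧ ⟶ Y)
    (hf : ((t.truncGEπ n).app X)⟦p⟧' ≫ f = 0) : f = 0 := by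
  have smul_π_comp_f : (p.negOnePow • ((t.truncGEπ n).app X)⟦p⟧') ≫ f = 0 := by
    rw [Linear.units_smul_comp, hf, smul_zero]
  obtain ⟨k, rfl⟩ := Triangle.yoneda_exact₃ _
    (Triangle.shift_distinguished _ (t.triangleLTGE_distinguished n X) p) f smul_π_comp_f
  have := t.isLE_shift ((t.truncLT n).obj X) (n - 1) p (n - 1 - p)
  have := t.isLE_shift (((t.truncLT n).obj X)⟦p⟧) (n - 1 - p) 1 (n - 2 - p)
  have hk : k = 0 := t.zero_of_isLE_of_isGE k (n - 2 - p) m (by lia) this inferInstance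
  rw [hk]
  exact comp_zero

section

variable {E : C} (hneg : ∀ p : ℤ, 0 < p → ∀ f : E⟦p⟧ ⟶ E, f = 0)
  (hend : ∀ f : E ⟶ E, f ≠ 0 → IsIso f)

include hend in
lemma comp_eq_zero_of_isLE {X : C} {n : ℤ} (hn : ¬ t.IsLE E n) [t.IsLE X n] (f : E ⟶ X)
    (g : X ⟶ E) : f ≫ g = 0 := by
  by_contra hfg
  have := hend _ hfg
  let retract : Retract E X := ⟨f, g ≫ inv (f ≫ g), by rw [← Category.assoc, IsIso.hom_inv_id]⟩
  exact hn (isLE_of_retract t retract n)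

include hneg hend in
lemma shift_comp_eq_zero_of_isLE {X : C} {n p : ℤ} (hn : ¬ t.IsLE E n) (hp : 0 ≤ p) [t.IsLE X n]
    (f : E⟦p⟧ ⟶ X) (g : X ⟶ E) : f ≫ g = 0 := by
  obtain rfl | hp := hp.eq_or_lt
  · rw [← cancel_epi ((shiftFunctorZero C ℤ).inv.app E), comp_zero, ← Category.assoc]
    exact comp_eq_zero_of_isLE t hend hn _ g
  · exact hneg p hp _

variable {b : ℤ} (hb : ¬ t.IsLE E (b - 1))

include hend hb in
lemma isGE_of_shiftOrthogonal_truncLT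
    (h : shiftOrthogonal ((t.truncGE b).obj E) ((t.truncLT b).obj E)) : t.IsGE E b := by
  have δ_eq_zero : (t.truncGEδLT b).app E = 0 :=
    (shiftOrthogonal _).le_shift 1 _ h _ ⟨_, 0, (shiftFunctorZero C ℤ).symm.app _, ⟨⟨⟩⟩⟩
  have : Mono ((t.truncLTι b).app E) :=
    Triangle.mono₁ _ (t.triangleLTGE_distinguished b E) δ_eq_zero
  have := isSplitMono_of_mono ((t.truncLTι b).app E)
  have ι_eq_zero : (t.truncLTι b).app E = 0 := by
    have := comp_eq_zero_of_isLE t hend hb (retraction ((t.truncLTι b).app E))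
      ((t.truncLTι b).app E)
    rw [← IsSplitMono.id_assoc ((t.truncLTι b).app E) ((t.truncLTι b).app E), this, comp_zero]
  rw [t.isGE_iff_isZero_truncLT_obj]
  exact IsZero.of_mono_eq_zero _ ι_eq_zero

variable [IsTriangulated C] [t.IsLE E b]

include hneg hend hb in
lemma shift_truncGE_hom_truncGELT_eq_zero {i p : ℤ} (hi : i < b) (hp : b - i - 1 ≤ p)
    (h : shiftOrthogonal ((t.truncGE b).obj E) ((t.truncLT i).obj E))
    (f : ((t.truncGE b).obj E)⟦p⟧ ⟶ (t.truncGELT i (i + 1)).obj E) : f = 0 := by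
  have f_comp_δ : f ≫ (t.truncGELTδLT i (i + 1)).app E = 0 :=
    shiftOrthogonal_iff.1 ((shiftOrthogonal _).le_shift 1 _ h) p _
  obtain ⟨g, hg⟩ := Triangle.coyoneda_exact₃ _
    (t.triangleLTLTGELT_distinguished i (i + 1) (by lia) E) f f_comp_δ
  change _ ⟶ (t.truncLT (i + 1)).obj E at g
  have := t.isLE_of_le ((t.truncLT (i + 1)).obj E) i (b - 1)
  have := t.isLE_shift E b p (b - p)
  have := t.isLE_of_le (E⟦p⟧) (b - p) (i + 1)
  have π_comp_g : ((t.truncGEπ b).app E)⟦p⟧' ≫ g = 0 := by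
    refine eq_zero_of_comp_truncLTι_eq_zero (Y := E⟦p⟧) (X := E) (n := i + 1) t _ ?_
    exact shift_comp_eq_zero_of_isLE t hneg hend hb (by lia) _ _
  have : t.IsGE ((t.truncGELT i (i + 1)).obj E) i := by
    dsimp
    infer_instance
  refine eq_zero_of_shift_truncGEπ_comp_eq_zero t (m := i) (by lia) f ?_
  rw [hg]
  exact ((Category.assoc ..).symm.trans (eq_whisker π_comp_g _)).trans zero_comp

variable (hlayer : ∀ i < b,
  (∀ f : ((t.truncGE b).obj E)⟦b - i⟧ ⟶ (t.truncGELT i (i + 1)).obj E, f = 0) →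
  (∀ f : ((t.truncGE b).obj E)⟦b - i - 1⟧ ⟶ (t.truncGELT i (i + 1)).obj E, f = 0) →
  shiftOrthogonal ((t.truncGE b).obj E) ((t.truncGELT i (i + 1)).obj E))

include hneg hend hb hlayer in
lemma shiftOrthogonal_truncLT_of_layers {a i : ℤ} [t.IsGE E a] (ha : a ≤ i) (hi : i ≤ b) :
    shiftOrthogonal ((t.truncGE b).obj E) ((t.truncLT i).obj E) := by
  induction i, ha using Int.leInduction with
  | base => exact ObjectProperty.prop_of_isZero _ (t.isZero_truncLT_obj_of_isGE a E)
  | succ i _ ih =>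
    have ortho_truncLT := ih (by lia)
    have hom_layer_eq_zero {p : ℤ} (hp : b - i - 1 ≤ p) :=
      shift_truncGE_hom_truncGELT_eq_zero t hneg hend hb (by lia) hp ortho_truncLT
    exact ObjectProperty.ext_of_isTriangulatedClosed₂ _ _
      (t.triangleLTLTGELT_distinguished i (i + 1) (by lia) E) ortho_truncLT
      (hlayer i (by lia) (hom_layer_eq_zero (by lia)) (hom_layer_eq_zero le_rfl))

include hneg hend hb hlayer in
lemma isGE_of_layers (a : ℤ) [t.IsGE E a] : t.IsGE E b := by
  obtain hab | hba := le_total a b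
  · exact isGE_of_shiftOrthogonal_truncLT t hend hb
      (shiftOrthogonal_truncLT_of_layers t hneg hend hb hlayer hab le_rfl)
  · exact t.isGE_of_ge E b a

end

end TStructure

section DerivedCategory

open TStructure

variable {𝒜 : Type u} [Category.{v} 𝒜] [Abelian 𝒜] [HasDerivedCategory.{w} 𝒜]

lemma isIso_homologyFunctor_map_truncGEπ (X : DerivedCategory 𝒜) (n : ℤ) :
    IsIso ((homologyFunctor 𝒜 n).map ((t.truncGEπ n).app X)) := by
  have hT := t.triangleLTGE_distinguished n X
  have hLT : ((t.truncLT n).obj X).IsLE (n - 1) := inferInstance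
  have : Mono ((homologyFunctor 𝒜 n).map ((t.truncGEπ n).app X)) :=
    (HomologySequence.mono_homologyMap_mor₂_iff _ hT n).2
      ((isZero_of_isLE _ (n - 1) n (by lia) (hX := hLT)).eq_of_src _ _)
  have : Epi ((homologyFunctor 𝒜 n).map ((t.truncGEπ n).app X)) :=
    (HomologySequence.epi_homologyMap_mor₂_iff _ hT n (n + 1) rfl).2
      ((isZero_of_isLE _ (n - 1) (n + 1) (by lia) (hX := hLT)).eq_of_tgt _ _)
  exact isIso_of_mono_of_epi _

lemma isIso_homologyFunctor_map_truncLTι (X : DerivedCategory 𝒜) (n : ℤ) :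
    IsIso ((homologyFunctor 𝒜 n).map ((t.truncLTι (n + 1)).app X)) := by
  have hT := t.triangleLTGE_distinguished (n + 1) X
  have hGE : ((t.truncGE (n + 1)).obj X).IsGE (n + 1) := inferInstance
  have : Epi ((homologyFunctor 𝒜 n).map ((t.truncLTι (n + 1)).app X)) :=
    (HomologySequence.epi_homologyMap_mor₁_iff _ hT n).2
      ((isZero_of_isGE _ (n + 1) n (by lia) (hX := hGE)).eq_of_tgt _ _)
  have : Mono ((homologyFunctor 𝒜 n).map ((t.truncLTι (n + 1)).app X)) :=
    (HomologySequence.mono_homologyMap_mor₁_iff _ hT (n - 1) n (by lia)).2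
      ((isZero_of_isGE _ (n + 1) (n - 1) (by lia) (hX := hGE)).eq_of_src _ _)
  exact isIso_of_mono_of_epi _

lemma nonempty_iso_shift_homology (X : DerivedCategory 𝒜) (n : ℤ) [X.IsGE n] [X.IsLE n] :
    Nonempty (X ≅ (degZero 𝒜 ((homologyFunctor 𝒜 n).obj X))⟦-n⟧) := by
  obtain ⟨M, ⟨e⟩⟩ := exists_iso_singleFunctor_obj_of_isGE_of_isLE X n
  let homologyIso : M ≅ (homologyFunctor 𝒜 n).obj X :=
    ((homologyFunctor 𝒜 n).mapIso e ≪≫ (singleFunctorCompHomologyFunctorIso 𝒜 n).app M).symm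
  exact ⟨e ≪≫ ((singleFunctors 𝒜).shiftIso (-n) n 0 (by lia)).symm.app M ≪≫
    (shiftFunctor _ (-n)).mapIso ((singleFunctor 𝒜 0).mapIso homologyIso)⟩

lemma nonempty_truncGE_iso_shift_homology (X : DerivedCategory 𝒜) (n : ℤ) [X.IsLE n] :
    Nonempty ((t.truncGE n).obj X ≅ (degZero 𝒜 ((homologyFunctor 𝒜 n).obj X))⟦-n⟧) := by
  have := isIso_homologyFunctor_map_truncGEπ X n
  obtain ⟨e⟩ := nonempty_iso_shift_homology ((t.truncGE n).obj X) n
  exact ⟨e ≪≫ (singleFunctor 𝒜 0 ⋙ shiftFunctor _ (-n)).mapIso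
    (asIso ((homologyFunctor 𝒜 n).map ((t.truncGEπ n).app X))).symm⟩

lemma nonempty_truncGELT_iso_shift_homology (X : DerivedCategory 𝒜) (n : ℤ) :
    Nonempty ((t.truncGELT n (n + 1)).obj X ≅
      (degZero 𝒜 ((homologyFunctor 𝒜 n).obj X))⟦-n⟧) := by
  have : ((t.truncLT (n + 1)).obj X).IsLE n := t.isLE_truncLT_obj ..
  have := isIso_homologyFunctor_map_truncLTι X n
  obtain ⟨e⟩ := nonempty_truncGE_iso_shift_homology ((t.truncLT (n + 1)).obj X) n
  exact ⟨e ≪≫ (singleFunctor 𝒜 0 ⋙ shiftFunctor _ (-n)).mapIso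
    (asIso ((homologyFunctor 𝒜 n).map ((t.truncLTι (n + 1)).app X)))⟩

lemma IsBoundedComplex.exists_isGE_isLE {E : DerivedCategory 𝒜} (hE : IsBoundedComplex 𝒜 E) :
    ∃ a c : ℤ, E.IsGE a ∧ E.IsLE c := by
  obtain ⟨a, c, isZero_homology⟩ := hE
  exact ⟨a, c, (isGE_iff E a).2 fun i hi => isZero_homology i (Or.inl hi),
    (isLE_iff E c).2 fun i hi => isZero_homology i (Or.inr hi)⟩

lemma AlmostHereditary.shiftOrthogonal_of_iso {A₀ : Set 𝒜} (hA₀ : AlmostHereditary 𝒜 A₀)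
    {M N : 𝒜} (hM : M ∈ A₀) (hN : N ∈ A₀) {X Y : DerivedCategory 𝒜} {m k p : ℤ}
    (e : X ≅ (degZero 𝒜 M)⟦m⟧) (e' : Y ≅ (degZero 𝒜 N)⟦k⟧) (hp : m + p = k)
    (hom_zero : ∀ f : X⟦p⟧ ⟶ Y, f = 0) (hom_one : ∀ f : X⟦p - 1⟧ ⟶ Y, f = 0) :
    shiftOrthogonal X Y := by
  have hom_zero' (f : degZero 𝒜 M ⟶ degZero 𝒜 N) : f = 0 := by
    rw [← cancel_mono ((shiftFunctorZero _ ℤ).inv.app _), zero_comp]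
    exact (shift_hom_eq_zero_iff e e' (by lia)).1 hom_zero _
  have hom_one' : ∀ f : degZero 𝒜 M ⟶ (degZero 𝒜 N)⟦(1 : ℤ)⟧, f = 0 :=
    (shift_hom_eq_zero_iff e e' (by lia)).1 hom_one
  exact shiftOrthogonal_iff.2 fun q => (shift_hom_eq_zero_iff e e' (by lia)).2
    (hA₀ M N hM hN hom_zero' hom_one' (k - m - q))

end DerivedCategory

theorem stmt3_general {𝒜 : Type u} [Category.{v} 𝒜] [Abelian 𝒜] [HasDerivedCategory.{w} 𝒜]
    (A₀ : Set 𝒜) (hAH : AlmostHereditary 𝒜 A₀)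
    (E : DerivedCategory 𝒜) (hE0 : ¬ IsZero E)
    (hEbdd : IsBoundedComplex 𝒜 E)
    (hE : ∀ i : ℤ, (DerivedCategory.homologyFunctor 𝒜 i).obj E ∈ A₀)
    (hvan : ∀ n : ℤ, n < 0 → ∀ f : E ⟶ E⟦n⟧, f = 0)
    (hend : ∀ f : E ⟶ E, f ≠ 0 → IsIso f) :
    ∃ A ∈ A₀, ∃ m : ℤ, Nonempty (E ≅ (degZero 𝒜 A)⟦m⟧) := by
  obtain ⟨a, c, _, _⟩ := hEbdd.exists_isGE_isLE
  obtain ⟨b, _, hb⟩ := exists_isLE_and_not_isLE_sub_one TStructure.t hE0 a c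
  have hneg (p : ℤ) (hp : 0 < p) : ∀ f : E⟦p⟧ ⟶ E, f = 0 :=
    let e := (shiftFunctorZero _ ℤ).symm.app E
    (shift_hom_eq_zero_iff e e (by lia)).2 (hvan (-p) (by lia))
  have hlayer := fun i (_ : i < b) =>
    have ⟨top_iso⟩ := nonempty_truncGE_iso_shift_homology E b
    have ⟨layer_iso⟩ := nonempty_truncGELT_iso_shift_homology E i
    hAH.shiftOrthogonal_of_iso (hE b) (hE i) top_iso layer_iso (p := b - i) (by lia)
  have := isGE_of_layers TStructure.t hneg hend hb hlayer a
  exact ⟨_, hE b, -b, nonempty_iso_shift_homology E b⟩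

theorem stmt3 {𝒜 : Type u} [Category.{v} 𝒜] [Abelian 𝒜] [HasDerivedCategory.{w} 𝒜]
    (A₀ : Set 𝒜) (hA₀ : IsAbelianSubcategory 𝒜 A₀) (hAH : AlmostHereditary 𝒜 A₀)
    (E : DerivedCategory 𝒜) (hE0 : ¬ IsZero E)
    (hEbdd : IsBoundedComplex 𝒜 E)
    (hE : ∀ i : ℤ, (DerivedCategory.homologyFunctor 𝒜 i).obj E ∈ A₀)
    -- (a) `Hom^n(E,E) = 0` for all `n < 0`
    (hvan : ∀ n : ℤ, n < 0 → ∀ f : E ⟶ E⟦n⟧, f = 0)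
    -- (b) every nonzero endomorphism of `E` is an isomorphism
    (hend : ∀ f : E ⟶ E, f ≠ 0 → IsIso f) :
    ∃ A ∈ A₀, ∃ m : ℤ, Nonempty (E ≅ (degZero 𝒜 A)⟦m⟧) :=
  stmt3_general A₀ hAH E hE0 hEbdd hE hvan hend
end
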